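/- For every a ≥ 1 and every smooth function u compactly supported in the rectangle R_a = (0,a)×(0,1/a), one has ∫_{R_a} (u_xx)² + (u_yy)² dx dy ≥ ω₁⁴(a⁴ + a⁻⁴) ∫_{R_a} u² dx dy; that is, the first eigenvalue of the strongly elliptic operator ∂⁴/∂x⁴ + ∂⁴/∂y⁴ on R_a with Dirichlet (clamped) boundary conditions equals ω₁⁴(a⁴ + a⁻⁴), obtained by separation of variables. -/

import Mathlib

open MeasureTheory Real Filter

noncomputable section

/-- Directional (partial) derivative of `u : ℝ × ℝ → ℝ` in direction `v`. -/
def pd (v : ℝ × ℝ) (u : ℝ × ℝ → ℝ) : ℝ × ℝ → ℝ := fun p => fderiv ℝ u p v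

/-- Second partial derivative `∂²u/∂x²`. -/
def uxx (u : ℝ × ℝ → ℝ) : ℝ × ℝ → ℝ := pd (1, 0) (pd (1, 0) u)

/-- Second partial derivative `∂²u/∂y²`. -/
def uyy (u : ℝ × ℝ → ℝ) : ℝ × ℝ → ℝ := pd (0, 1) (pd (0, 1) u)

/-- Mixed second partial derivative `∂²u/∂x∂y`. -/
def uxy (u : ℝ × ℝ → ℝ) : ℝ × ℝ → ℝ := pd (0, 1) (pd (1, 0) u)

/-- The Laplacian `Δu = u_xx + u_yy`. -/
def lap (u : ℝ × ℝ → ℝ) : ℝ × ℝ → ℝ := fun p => uxx u p + uyy u p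

/-- The open rectangle `R_a = (0,a) × (0,1/a)` of unit area. -/
def Rect (a : ℝ) : Set (ℝ × ℝ) := Set.Ioo 0 a ×ˢ Set.Ioo 0 (1 / a)

/-- Admissible test functions: smooth, compactly supported inside `Ω`. -/
def Adm (Ω : Set (ℝ × ℝ)) (u : ℝ × ℝ → ℝ) : Prop :=
  ContDiff ℝ (⊤ : ℕ∞) u ∧ HasCompactSupport u ∧ tsupport u ⊆ Ω

/-- First Dirichlet eigenvalue of the biharmonic operator on `R_a`,
characterized variationally as the infimum of the Rayleigh quotient. -/
def lam1 (a : ℝ) : ℝ :=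
  sInf { μ | ∃ u : ℝ × ℝ → ℝ, Adm (Rect a) u ∧ u ≠ 0 ∧
    μ = (∫ p, (lap u p) ^ 2) / (∫ p, (u p) ^ 2) }

/-! The one-dimensional bound `∫ f''² ≥ k⁴ ∫ f²` on `(0, L)` is Jacobi's argument: as long as there
is no point conjugate to `0`, that is `cos (k x) cosh (k x) ≠ 1` on `(0, L)`, the matrix Riccati
equation of `y'''' = k⁴ y` has a solution, and with it `f''² - k⁴ f²` is a perfect square plus an
exact derivative. For `k = ω / L` the bound is sharp: the inequalities valid for test functions
extend by density to all smooth functions vanishing with their first derivative at the endpoints,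
and the clamped mode of `y'''' = k⁴ y` turns the bound into an equality.

On a product `I × J`, slicing (Fubini) gives the sum of the one-dimensional bounds, and a product
`f(x) g(y)` has as Rayleigh quotient the sum of those of `f` and `g`, so the two infima add up. -/

open Set Topology

section General

variable {X : Type*} [TopologicalSpace X] {g : X → ℝ}

theorem hasCompactSupport_sq (hg : HasCompactSupport g) : HasCompactSupport fun x => g x ^ 2 :=
  hg.comp_left (g := fun t : ℝ => t ^ 2) (by simp)

variable [MeasurableSpace X] [OpensMeasurableSpace X] {μ : Measure X}
  [IsFiniteMeasureOnCompacts μ]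

theorem integrable_sq_of_hasCompactSupport (hg : Continuous g) (hs : HasCompactSupport g) :
    Integrable (fun x => g x ^ 2) μ :=
  (hg.pow 2).integrable_of_hasCompactSupport (hasCompactSupport_sq hs)

theorem integral_sq_pos_of_hasCompactSupport [μ.IsOpenPosMeasure] (hg : Continuous g)
    (hs : HasCompactSupport g) (hne : g ≠ 0) : 0 < ∫ x, g x ^ 2 ∂μ := by
  obtain ⟨x, hx⟩ := Function.ne_iff.1 hne
  exact (hg.pow 2).integral_pos_of_hasCompactSupport_nonneg_nonzero (hasCompactSupport_sq hs)
    (fun x => sq_nonneg (g x)) (pow_ne_zero 2 hx)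

end General

theorem deriv_deriv_mul {f g : ℝ → ℝ} (hf : ContDiff ℝ 2 f) (hg : ContDiff ℝ 2 g) (x : ℝ) :
    deriv (deriv fun x => f x * g x) x =
      deriv (deriv f) x * g x + 2 * (deriv f x * deriv g x) + f x * deriv (deriv g) x := by
  have hf' : Differentiable ℝ (deriv f) := hf.differentiable_deriv_two
  have hg' : Differentiable ℝ (deriv g) := hg.differentiable_deriv_two
  have hf : Differentiable ℝ f := hf.differentiable two_ne_zero
  have hg : Differentiable ℝ g := hg.differentiable two_ne_zero
  have hderiv : deriv (fun x => f x * g x) = fun x => deriv f x * g x + f x * deriv g x :=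
    funext fun x => deriv_fun_mul (hf x) (hg x)
  rw [hderiv, deriv_fun_add (by fun_prop) (by fun_prop), deriv_fun_mul (hf' x) (hg x),
    deriv_fun_mul (hf x) (hg' x)]
  ring

/-- The set of Rayleigh quotients `N v / D v` of the nonzero `v` satisfying `P`. -/
def rayleighQuotients {V : Type*} [Zero V] (P : V → Prop) (N D : V → ℝ) : Set ℝ :=
  {μ | ∃ v, P v ∧ v ≠ 0 ∧ μ = N v / D v}

theorem mem_lowerBounds_rayleighQuotients {V : Type*} [Zero V] {P : V → Prop} {N D : V → ℝ} {c : ℝ}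
    (hD : ∀ v, P v → v ≠ 0 → 0 < D v) (hN0 : N 0 = 0) (hD0 : D 0 = 0) :
    c ∈ lowerBounds (rayleighQuotients P N D) ↔ ∀ v, P v → c * D v ≤ N v := by
  constructor
  · intro h v hv
    rcases eq_or_ne v 0 with rfl | hv0
    · simp [hN0, hD0]
    · exact (le_div_iff₀ (hD v hv hv0)).1 (h ⟨v, hv, hv0, rfl⟩)
  · rintro h μ ⟨v, hv, hv0, rfl⟩
    exact (le_div_iff₀ (hD v hv hv0)).2 (h v hv)

/-- Smooth functions of one variable with compact support inside `I`, the one-dimensional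
counterpart of `Adm`. -/
structure IsTestFunction (I : Set ℝ) (f : ℝ → ℝ) : Prop where
  contDiff : ContDiff ℝ (⊤ : ℕ∞) f
  hasCompactSupport : HasCompactSupport f
  tsupport_subset : tsupport f ⊆ I

/-- The Rayleigh quotients of the clamped beam operator `d⁴/dx⁴` on `I`; their infimum is its first
eigenvalue. -/
abbrev beamQuotients (I : Set ℝ) : Set ℝ :=
  rayleighQuotients (IsTestFunction I) (fun f => ∫ x, deriv (deriv f) x ^ 2) fun f => ∫ x, f x ^ 2

/-- The Rayleigh quotients of the clamped plate operator `∂⁴/∂x⁴ + ∂⁴/∂y⁴` on `Ω`; their infimum is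
its first eigenvalue. -/
abbrev plateQuotients (Ω : Set (ℝ × ℝ)) : Set ℝ :=
  rayleighQuotients (Adm Ω) (fun u => ∫ p, (uxx u p ^ 2 + uyy u p ^ 2)) fun u => ∫ p, u p ^ 2

namespace IsTestFunction

variable {I : Set ℝ} {f : ℝ → ℝ}

protected theorem deriv (hf : IsTestFunction I f) : IsTestFunction I (deriv f) where
  contDiff := (contDiff_infty_iff_deriv.1 hf.contDiff).2
  hasCompactSupport := hf.hasCompactSupport.deriv
  tsupport_subset := tsupport_deriv_subset.trans hf.tsupport_subset

protected theorem hasDerivAt (hf : IsTestFunction I f) (x : ℝ) : HasDerivAt f (deriv f x) x :=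
  (hf.contDiff.differentiable (by simp) x).hasDerivAt

theorem contDiff_two (hf : IsTestFunction I f) : ContDiff ℝ 2 f :=
  hf.contDiff.of_le (WithTop.coe_le_coe.2 le_top)

theorem integrable_sq (hf : IsTestFunction I f) : Integrable fun x => f x ^ 2 :=
  integrable_sq_of_hasCompactSupport hf.contDiff.continuous hf.hasCompactSupport

theorem integral_sq_pos (hf : IsTestFunction I f) (h0 : f ≠ 0) : 0 < ∫ x, f x ^ 2 :=
  integral_sq_pos_of_hasCompactSupport hf.contDiff.continuous hf.hasCompactSupport h0

end IsTestFunction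

theorem mem_lowerBounds_beamQuotients {I : Set ℝ} {c : ℝ} :
    c ∈ lowerBounds (beamQuotients I) ↔
      ∀ f, IsTestFunction I f → c * ∫ x, f x ^ 2 ≤ ∫ x, deriv (deriv f) x ^ 2 :=
  mem_lowerBounds_rayleighQuotients (fun _ hf => hf.integral_sq_pos) (by simp) (by simp)

section Riccati

/-- Solutions on `I` of the matrix Riccati equation of `y'''' = κ y`, written out for the entries of
the symmetric matrix with rows `(p, -q)` and `(-q, r)`. -/
structure IsRiccatiSolution (κ : ℝ) (I : Set ℝ) (p q r : ℝ → ℝ) : Prop where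
  hasDerivAt_left : ∀ x ∈ I, HasDerivAt p (2 * q x - p x ^ 2) x
  hasDerivAt_mid : ∀ x ∈ I, HasDerivAt q (r x - p x * q x) x
  hasDerivAt_right : ∀ x ∈ I, HasDerivAt r (-κ - q x ^ 2) x

/-- The quadratic form `p f'² - 2 q f f' + r f²` of `(f, f')`, whose derivative completes the square
in `f''² - κ f²` when `(p, q, r)` is an `IsRiccatiSolution`. -/
def riccatiForm (p q r f : ℝ → ℝ) (x : ℝ) : ℝ :=
  p x * deriv f x ^ 2 - 2 * (q x * (f x * deriv f x)) + r x * f x ^ 2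

/-- The term `f'' - p f' + q f` that remains, squared, after subtracting the derivative of
`riccatiForm p q r f`. -/
def riccatiDefect (p q f : ℝ → ℝ) (x : ℝ) : ℝ :=
  deriv (deriv f) x - p x * deriv f x + q x * f x

variable {κ : ℝ} {p q r f : ℝ → ℝ} {I : Set ℝ}

theorem IsRiccatiSolution.hasDerivAt_riccatiForm (h : IsRiccatiSolution κ I p q r) {x : ℝ}
    (hx : x ∈ I) (hf : HasDerivAt f (deriv f x) x)
    (hf' : HasDerivAt (deriv f) (deriv (deriv f) x) x) :
    HasDerivAt (riccatiForm p q r f)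
      (deriv (deriv f) x ^ 2 - κ * f x ^ 2 - riccatiDefect p q f x ^ 2) x := by
  refine ((((h.hasDerivAt_left x hx).mul (hf'.pow 2)).sub
    (((h.hasDerivAt_mid x hx).mul (hf.mul hf')).const_mul 2)).add
    ((h.hasDerivAt_right x hx).mul (hf.pow 2))).congr_deriv ?_
  simp only [riccatiDefect, Pi.mul_apply, Pi.pow_apply]
  push_cast
  ring

theorem deriv_deriv_of_notMem_tsupport {x : ℝ} (hx : x ∉ tsupport f) :
    deriv (deriv f) x = 0 :=
  deriv_of_notMem_tsupport fun h => hx (tsupport_deriv_subset h)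

theorem riccatiForm_eq_zero_of_notMem_tsupport {x : ℝ} (hx : x ∉ tsupport f) :
    riccatiForm p q r f x = 0 := by
  simp [riccatiForm, image_eq_zero_of_notMem_tsupport hx, deriv_of_notMem_tsupport hx]

theorem riccatiDefect_eq_zero_of_notMem_tsupport {x : ℝ} (hx : x ∉ tsupport f) :
    riccatiDefect p q f x = 0 := by
  simp [riccatiDefect, image_eq_zero_of_notMem_tsupport hx, deriv_of_notMem_tsupport hx,
    deriv_deriv_of_notMem_tsupport hx]

protected theorem IsTestFunction.hasDerivAt_riccatiForm (hf : IsTestFunction I f)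
    (h : IsRiccatiSolution κ I p q r) (x : ℝ) :
    HasDerivAt (riccatiForm p q r f)
      (deriv (deriv f) x ^ 2 - κ * f x ^ 2 - riccatiDefect p q f x ^ 2) x := by
  by_cases hx : x ∈ tsupport f
  · exact h.hasDerivAt_riccatiForm (hf.tsupport_subset hx) (hf.hasDerivAt x)
      (hf.deriv.hasDerivAt x)
  · have hform : riccatiForm p q r f =ᶠ[𝓝 x] fun _ => 0 := by
      filter_upwards [(isClosed_tsupport f).isOpen_compl.mem_nhds hx] with y hy
        using riccatiForm_eq_zero_of_notMem_tsupport hy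
    simpa [riccatiDefect_eq_zero_of_notMem_tsupport hx, image_eq_zero_of_notMem_tsupport hx,
      deriv_deriv_of_notMem_tsupport hx] using
      (hasDerivAt_const x (0 : ℝ)).congr_of_eventuallyEq hform

theorem IsTestFunction.continuous_riccatiDefect (hf : IsTestFunction I f) (hI : IsOpen I)
    (hp : ContinuousOn p I) (hq : ContinuousOn q I) : Continuous (riccatiDefect p q f) := by
  have hf0 := hf.contDiff.continuous
  have hf1 := hf.deriv.contDiff.continuous
  have hf2 := hf.deriv.deriv.contDiff.continuous
  refine ContinuousOn.continuous_of_tsupport_subset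
    (((hf2.continuousOn.sub (hp.mul hf1.continuousOn)).add (hq.mul hf0.continuousOn))) hI
    ((closure_minimal (fun x hx => ?_) (isClosed_tsupport f)).trans hf.tsupport_subset)
  by_contra h
  exact hx (riccatiDefect_eq_zero_of_notMem_tsupport h)

theorem IsTestFunction.mul_integral_sq_le_of_riccati (hf : IsTestFunction I f) (hI : IsOpen I)
    (h : IsRiccatiSolution κ I p q r) :
    κ * ∫ x, f x ^ 2 ≤ ∫ x, deriv (deriv f) x ^ 2 := by
  have hderiv := hf.hasDerivAt_riccatiForm h
  have hform : Integrable (riccatiForm p q r f) :=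
    (continuous_iff_continuousAt.2 fun x => (hderiv x).continuousAt).integrable_of_hasCompactSupport
      (.intro hf.hasCompactSupport fun x => riccatiForm_eq_zero_of_notMem_tsupport)
  have hdefect : Integrable fun x => riccatiDefect p q f x ^ 2 :=
    integrable_sq_of_hasCompactSupport (hf.continuous_riccatiDefect hI
      (fun x hx => (h.hasDerivAt_left x hx).continuousAt.continuousWithinAt)
      (fun x hx => (h.hasDerivAt_mid x hx).continuousAt.continuousWithinAt))
      (.intro hf.hasCompactSupport fun x => riccatiDefect_eq_zero_of_notMem_tsupport)
  have hdiff : Integrable fun x => deriv (deriv f) x ^ 2 - κ * f x ^ 2 :=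
    hf.deriv.deriv.integrable_sq.sub (hf.integrable_sq.const_mul κ)
  have hzero := integral_eq_zero_of_hasDerivAt_of_integrable hderiv (hdiff.sub hdefect) hform
  rw [integral_sub hdiff hdefect, integral_sub hf.deriv.deriv.integrable_sq
    (hf.integrable_sq.const_mul κ), integral_const_mul] at hzero
  have hnonneg : 0 ≤ ∫ x, riccatiDefect p q f x ^ 2 := integral_nonneg fun x => sq_nonneg _
  linarith

end Riccati

/-- The solution comes from the Wronskian `1 - cos cosh` of `cosh - cos` and `sinh - sin`, which
solve `y'''' = y` and vanish with their first derivative at `0`. -/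
theorem isRiccatiSolution_cos_cosh {k L : ℝ}
    (hk : ∀ x ∈ Ioo 0 L, cos (k * x) * cosh (k * x) ≠ 1) :
    IsRiccatiSolution (k ^ 4) (Ioo 0 L)
      (fun x => k * (sin (k * x) * cosh (k * x) - cos (k * x) * sinh (k * x)) /
        (1 - cos (k * x) * cosh (k * x)))
      (fun x => k ^ 2 * (sin (k * x) * sinh (k * x)) / (1 - cos (k * x) * cosh (k * x)))
      (fun x => k ^ 3 * (cos (k * x) * sinh (k * x) + sin (k * x) * cosh (k * x)) /
        (1 - cos (k * x) * cosh (k * x))) := by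
  have hW (x : ℝ) (hx : x ∈ Ioo 0 L) : 1 - cos (k * x) * cosh (k * x) ≠ 0 :=
    sub_ne_zero.2 (hk x hx).symm
  have hlin (x : ℝ) : HasDerivAt (fun x => k * x) k x := by
    simpa using (hasDerivAt_id x).const_mul k
  have hW' (x : ℝ) := ((hlin x).cos.fun_mul (hlin x).cosh).const_sub 1
  have hsc (x : ℝ) := (hlin x).sin.fun_mul (hlin x).cosh
  have hcs (x : ℝ) := (hlin x).cos.fun_mul (hlin x).sinh
  have hss (x : ℝ) := (hlin x).sin.fun_mul (hlin x).sinh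
  refine ⟨fun x hx => ?_, fun x hx => ?_, fun x hx => ?_⟩
  · refine ((((hsc x).fun_sub (hcs x)).const_mul k).fun_div (hW' x) (hW x hx)).congr_deriv ?_
    have := hW x hx
    field_simp
    ring
  · refine (((hss x).const_mul (k ^ 2)).fun_div (hW' x) (hW x hx)).congr_deriv ?_
    have := hW x hx
    field_simp
    ring
  · refine ((((hcs x).fun_add (hsc x)).const_mul (k ^ 3)).fun_div (hW' x) (hW x hx)).congr_deriv ?_
    have := hW x hx
    field_simp
    linear_combination
      k ^ 4 * ((sinh (k * x) ^ 2 - cosh (k * x) ^ 2) * sin_sq_add_cos_sq (k * x)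
        - cosh_sq (k * x))

theorem IsTestFunction.pow_four_mul_integral_sq_le {k L : ℝ} {f : ℝ → ℝ}
    (hf : IsTestFunction (Ioo 0 L) f) (hk : ∀ x ∈ Ioo 0 L, cos (k * x) * cosh (k * x) ≠ 1) :
    k ^ 4 * ∫ x, f x ^ 2 ≤ ∫ x, deriv (deriv f) x ^ 2 :=
  hf.mul_integral_sq_le_of_riccati isOpen_Ioo (isRiccatiSolution_cos_cosh hk)

section Cutoff

/-- A smooth transition from `0` on `t ≤ 1` to `1` on `2 ≤ t`; unlike `Real.smoothTransition` it
vanishes near `0`. -/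
def smoothStep (t : ℝ) : ℝ :=
  smoothTransition (t - 1)

theorem contDiff_smoothStep : ContDiff ℝ (⊤ : ℕ∞) smoothStep :=
  smoothTransition.contDiff.comp (contDiff_id.sub contDiff_const)

theorem smoothStep_of_le_one {t : ℝ} (ht : t ≤ 1) : smoothStep t = 0 :=
  smoothTransition.zero_of_nonpos (by linarith)

theorem smoothStep_of_two_le {t : ℝ} (ht : 2 ≤ t) : smoothStep t = 1 :=
  smoothTransition.one_of_one_le (by linarith)

theorem abs_smoothStep_le_one (t : ℝ) : |smoothStep t| ≤ 1 :=
  abs_le.2 ⟨neg_one_lt_zero.le.trans (smoothTransition.nonneg _), smoothTransition.le_one _⟩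

theorem hasCompactSupport_deriv_smoothStep : HasCompactSupport (deriv smoothStep) := by
  refine .intro (isCompact_Icc (a := 1) (b := 2)) fun t ht => ?_
  rcases lt_or_ge t 1 with h1 | h1
  · have h : smoothStep =ᶠ[𝓝 t] fun _ => 0 :=
      (eventually_le_nhds h1).mono fun y => smoothStep_of_le_one
    simpa using h.deriv_eq
  · have h : smoothStep =ᶠ[𝓝 t] fun _ => 1 :=
      (eventually_ge_nhds (not_le.1 fun h2 => ht ⟨h1, h2⟩)).mono fun y => smoothStep_of_two_le
    simpa using h.deriv_eq

theorem exists_abs_mul_deriv_smoothStep_le : ∃ C, ∀ t, |t * deriv smoothStep t| ≤ C := by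
  have hcont : Continuous (deriv smoothStep) := contDiff_smoothStep.continuous_deriv (by simp)
  exact (continuous_id.mul hcont).bounded_above_of_compact_support
    hasCompactSupport_deriv_smoothStep.mul_left

theorem exists_abs_sq_mul_deriv_deriv_smoothStep_le :
    ∃ C, ∀ t, |t ^ 2 * deriv (deriv smoothStep) t| ≤ C := by
  have hcont : Continuous (deriv (deriv smoothStep)) :=
    (contDiff_infty_iff_deriv.1 contDiff_smoothStep).2.continuous_deriv (by simp)
  exact ((continuous_pow 2).mul hcont).bounded_above_of_compact_support
    hasCompactSupport_deriv_smoothStep.deriv.mul_left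

/-- The weight `(x - a) (b - x)`, comparable on `[a, b]` to the distance from the endpoints. -/
def edgeWeight (a b x : ℝ) : ℝ :=
  (x - a) * (b - x)

/-- The cutoff `smoothStep (N (x - a) (b - x))`, which for large `N` removes a thin layer at the
endpoints of `[a, b]`. -/
def edgeCutoff (a b N x : ℝ) : ℝ :=
  smoothStep (N * edgeWeight a b x)

variable {a b x : ℝ}

theorem edgeWeight_nonneg (hx : x ∈ Icc a b) : 0 ≤ edgeWeight a b x :=
  mul_nonneg (sub_nonneg.2 hx.1) (sub_nonneg.2 hx.2)

theorem edgeWeight_pos (hx : x ∈ Ioo a b) : 0 < edgeWeight a b x :=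
  mul_pos (sub_pos.2 hx.1) (sub_pos.2 hx.2)

theorem edgeWeight_le_sq (hx : x ∈ Icc a b) : edgeWeight a b x ≤ (b - a) ^ 2 := by
  unfold edgeWeight
  nlinarith [hx.1, hx.2]

theorem mem_Ioo_of_edgeWeight_pos (hab : a ≤ b) (hx : 0 < edgeWeight a b x) : x ∈ Ioo a b := by
  rcases pos_and_pos_or_neg_and_neg_of_mul_pos hx with h | h
  · exact ⟨sub_pos.1 h.1, sub_pos.1 h.2⟩
  · linarith [h.1, h.2]

theorem hasDerivAt_edgeWeight (a b x : ℝ) : HasDerivAt (edgeWeight a b) (a + b - 2 * x) x :=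
  (((hasDerivAt_id x).sub_const a).mul ((hasDerivAt_id x).const_sub b)).congr_deriv (by
    simp only [id_eq]; ring)

theorem abs_add_sub_two_mul_le (hx : x ∈ Icc a b) : |a + b - 2 * x| ≤ b - a :=
  abs_le.2 ⟨by linarith [hx.2], by linarith [hx.1]⟩

theorem contDiff_edgeCutoff (a b N : ℝ) : ContDiff ℝ (⊤ : ℕ∞) (edgeCutoff a b N) := by
  unfold edgeCutoff edgeWeight
  exact contDiff_smoothStep.comp (by fun_prop)

theorem deriv_edgeCutoff (a b N : ℝ) : deriv (edgeCutoff a b N) = fun x =>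
    deriv smoothStep (N * edgeWeight a b x) * (N * (a + b - 2 * x)) :=
  funext fun x => (((contDiff_smoothStep.differentiable (by simp) _).hasDerivAt).comp x
    ((hasDerivAt_edgeWeight a b x).const_mul N)).deriv

theorem deriv_deriv_edgeCutoff (a b N x : ℝ) : deriv (deriv (edgeCutoff a b N)) x =
    deriv (deriv smoothStep) (N * edgeWeight a b x) * (N * (a + b - 2 * x)) ^ 2 -
      2 * N * deriv smoothStep (N * edgeWeight a b x) := by
  have hstep : Differentiable ℝ (deriv smoothStep) :=
    (contDiff_infty_iff_deriv.1 contDiff_smoothStep).2.differentiable (by simp)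
  have hslope : HasDerivAt (fun x => N * (a + b - 2 * x)) (-(2 * N)) x :=
    ((((hasDerivAt_id x).const_mul 2).const_sub (a + b)).const_mul N).congr_deriv (by ring)
  have hcomp : HasDerivAt (fun x => deriv smoothStep (N * edgeWeight a b x))
      (deriv (deriv smoothStep) (N * edgeWeight a b x) * (N * (a + b - 2 * x))) x :=
    ((hstep _).hasDerivAt).comp x ((hasDerivAt_edgeWeight a b x).const_mul N)
  rw [deriv_edgeCutoff, (hcomp.fun_mul hslope).deriv]
  ring

theorem abs_edgeCutoff_le_one (a b N x : ℝ) : |edgeCutoff a b N x| ≤ 1 :=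
  abs_smoothStep_le_one _

theorem exists_abs_deriv_edgeCutoff_mul_le (a b : ℝ) :
    ∃ C, ∀ N, ∀ x ∈ Icc a b, |deriv (edgeCutoff a b N) x * edgeWeight a b x| ≤ C := by
  obtain ⟨C, hC⟩ := exists_abs_mul_deriv_smoothStep_le
  refine ⟨C * (b - a), fun N x hx => ?_⟩
  have heq : deriv (edgeCutoff a b N) x * edgeWeight a b x =
      N * edgeWeight a b x * deriv smoothStep (N * edgeWeight a b x) * (a + b - 2 * x) := by
    rw [deriv_edgeCutoff]; ring
  rw [heq, abs_mul]
  exact mul_le_mul (hC _) (abs_add_sub_two_mul_le hx) (abs_nonneg _) ((abs_nonneg _).trans (hC 0))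

theorem exists_abs_deriv_deriv_edgeCutoff_mul_le (a b : ℝ) :
    ∃ C, ∀ N, ∀ x ∈ Icc a b,
      |deriv (deriv (edgeCutoff a b N)) x * edgeWeight a b x ^ 2| ≤ C := by
  obtain ⟨C₁, hC₁⟩ := exists_abs_mul_deriv_smoothStep_le
  obtain ⟨C₂, hC₂⟩ := exists_abs_sq_mul_deriv_deriv_smoothStep_le
  refine ⟨C₂ * (b - a) ^ 2 + 2 * (C₁ * (b - a) ^ 2), fun N x hx => ?_⟩
  set t := N * edgeWeight a b x with ht
  have heq : deriv (deriv (edgeCutoff a b N)) x * edgeWeight a b x ^ 2 =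
      t ^ 2 * deriv (deriv smoothStep) t * (a + b - 2 * x) ^ 2 -
        2 * (t * deriv smoothStep t * edgeWeight a b x) := by
    rw [deriv_deriv_edgeCutoff, ← ht, ht]; ring
  have hslope : |(a + b - 2 * x) ^ 2| ≤ (b - a) ^ 2 := by
    rw [abs_pow]
    exact pow_le_pow_left₀ (abs_nonneg _) (abs_add_sub_two_mul_le hx) 2
  have hweight : |edgeWeight a b x| ≤ (b - a) ^ 2 := by
    rw [abs_of_nonneg (edgeWeight_nonneg hx)]
    exact edgeWeight_le_sq hx
  rw [heq]
  refine (abs_sub _ _).trans (add_le_add ?_ ?_)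
  · rw [abs_mul]
    exact mul_le_mul (hC₂ t) hslope (abs_nonneg _) ((abs_nonneg _).trans (hC₂ t))
  · rw [abs_mul, abs_mul, abs_two]
    exact mul_le_mul_of_nonneg_left
      (mul_le_mul (hC₁ t) hweight (abs_nonneg _) ((abs_nonneg _).trans (hC₁ t))) zero_le_two

theorem tsupport_edgeCutoff_subset (hab : a ≤ b) {N : ℝ} (hN : 0 ≤ N) :
    tsupport (edgeCutoff a b N) ⊆ Ioo a b := by
  have hclosed : IsClosed {x | 1 ≤ N * edgeWeight a b x} := by
    unfold edgeWeight
    exact isClosed_le continuous_const (by fun_prop)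
  refine (closure_minimal (fun x hx => ?_) hclosed).trans fun x hx => ?_
  · exact le_of_not_ge fun h => hx (smoothStep_of_le_one h)
  · exact mem_Ioo_of_edgeWeight_pos hab (pos_of_mul_pos_right (one_pos.trans_le hx) hN)

theorem eventually_edgeCutoff_eventuallyEq_one (hx : x ∈ Ioo a b) :
    ∀ᶠ n : ℕ in atTop, edgeCutoff a b n =ᶠ[𝓝 x] fun _ => 1 := by
  have hlarge := (tendsto_natCast_atTop_atTop (R := ℝ)).atTop_mul_const (edgeWeight_pos hx)
  filter_upwards [hlarge.eventually_gt_atTop 2] with n hn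
  have hcont : ContinuousAt (fun y => (n : ℝ) * edgeWeight a b y) x :=
    ((hasDerivAt_edgeWeight a b x).const_mul (n : ℝ)).continuousAt
  exact (hcont.eventually_const_lt hn).mono fun y hy => smoothStep_of_two_le hy.le

end Cutoff

theorem tendsto_integral_sq_of_eventually_eq {a b C : ℝ} (hab : a ≤ b) {g : ℕ → ℝ → ℝ}
    {h : ℝ → ℝ} (hg : ∀ n, IsTestFunction (Ioo a b) (g n))
    (hbound : ∀ n, ∀ x ∈ Icc a b, |g n x| ≤ C) (heq : ∀ x ∈ Ioo a b, ∀ᶠ n in atTop, g n x = h x) :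
    Tendsto (fun n => ∫ x, g n x ^ 2) atTop (𝓝 (∫ x in a..b, h x ^ 2)) := by
  have hrestrict (n : ℕ) : ∫ x in Ioo a b, g n x ^ 2 = ∫ x, g n x ^ 2 :=
    setIntegral_eq_integral_of_forall_compl_eq_zero fun x hx => by
      simp [image_eq_zero_of_notMem_tsupport fun hx' => hx ((hg n).tsupport_subset hx')]
  rw [intervalIntegral.integral_of_le hab, integral_Ioc_eq_integral_Ioo]
  simp_rw [← hrestrict]
  refine tendsto_integral_of_dominated_convergence (fun _ => C ^ 2)
    (fun n => ((hg n).contDiff.continuous.pow 2).aestronglyMeasurable) (integrable_const _)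
    (fun n => ?_) ?_
  · filter_upwards [ae_restrict_mem measurableSet_Ioo] with x hx
    rw [norm_pow]
    exact pow_le_pow_left₀ (norm_nonneg _) (hbound n x (Ioo_subset_Icc_self hx)) 2
  · filter_upwards [ae_restrict_mem measurableSet_Ioo] with x hx
    exact tendsto_const_nhds.congr' ((heq x hx).mono fun n hn => by simp only [hn])

section Clamped

/-- Smooth functions satisfying the clamped boundary conditions of `[a, b]`. -/
structure IsClamped (a b : ℝ) (φ : ℝ → ℝ) : Prop where
  contDiff : ContDiff ℝ (⊤ : ℕ∞) φ
  apply_left : φ a = 0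
  apply_right : φ b = 0
  deriv_left : deriv φ a = 0
  deriv_right : deriv φ b = 0

theorem abs_le_mul_abs_sub_of_abs_deriv_le {g : ℝ → ℝ} (hg : Differentiable ℝ g) {e x M : ℝ}
    (he : g e = 0) (hM : ∀ y ∈ uIcc e x, |deriv g y| ≤ M) : |g x| ≤ M * |x - e| := by
  simpa [he] using (convex_uIcc e x).norm_image_sub_le_of_norm_deriv_le
    (fun y _ => hg y) hM left_mem_uIcc right_mem_uIcc

theorem abs_le_mul_sq_of_abs_deriv_deriv_le {g : ℝ → ℝ} (hg : Differentiable ℝ g)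
    (hg' : Differentiable ℝ (deriv g)) {e x M : ℝ} (he : g e = 0) (he' : deriv g e = 0)
    (hM : ∀ y ∈ uIcc e x, |deriv (deriv g) y| ≤ M) : |g x| ≤ M * |x - e| ^ 2 := by
  have hM0 : 0 ≤ M := (abs_nonneg _).trans (hM e left_mem_uIcc)
  have hderiv : ∀ y ∈ uIcc e x, |deriv g y| ≤ M * |x - e| := fun y hy =>
    (abs_le_mul_abs_sub_of_abs_deriv_le hg' he' fun z hz =>
      hM z (uIcc_subset_uIcc_left hy hz)).trans
      (mul_le_mul_of_nonneg_left (abs_sub_left_of_mem_uIcc hy) hM0)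
  rw [pow_two, ← mul_assoc]
  exact abs_le_mul_abs_sub_of_abs_deriv_le hg he hderiv

namespace IsClamped

variable {a b : ℝ} {φ : ℝ → ℝ}

theorem contDiff_deriv (hφ : IsClamped a b φ) : ContDiff ℝ (⊤ : ℕ∞) (deriv φ) :=
  (contDiff_infty_iff_deriv.1 hφ.contDiff).2

theorem exists_abs_deriv_deriv_le (hφ : IsClamped a b φ) :
    ∃ M, ∀ x ∈ Icc a b, |deriv (deriv φ) x| ≤ M :=
  isCompact_Icc.exists_bound_of_continuousOn
    (hφ.contDiff_deriv.continuous_deriv (by simp)).continuousOn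

theorem mul_abs_deriv_le (hφ : IsClamped a b φ) {M : ℝ}
    (hM : ∀ x ∈ Icc a b, |deriv (deriv φ) x| ≤ M) {x : ℝ} (hx : x ∈ Icc a b) :
    (b - a) * |deriv φ x| ≤ 2 * M * edgeWeight a b x := by
  have hsub {e : ℝ} (he : e ∈ Icc a b) : ∀ y ∈ uIcc e x, |deriv (deriv φ) y| ≤ M :=
    fun y hy => hM y (ordConnected_Icc.uIcc_subset he hx hy)
  have hdiff : Differentiable ℝ (deriv φ) := hφ.contDiff_deriv.differentiable (by simp)
  have hab : a ≤ b := hx.1.trans hx.2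
  have ha := abs_le_mul_abs_sub_of_abs_deriv_le hdiff hφ.deriv_left (hsub (left_mem_Icc.2 hab))
  have hb := abs_le_mul_abs_sub_of_abs_deriv_le hdiff hφ.deriv_right (hsub (right_mem_Icc.2 hab))
  rw [abs_of_nonneg (sub_nonneg.2 hx.1)] at ha
  rw [abs_sub_comm, abs_of_nonneg (sub_nonneg.2 hx.2)] at hb
  calc (b - a) * |deriv φ x| = (b - x) * |deriv φ x| + (x - a) * |deriv φ x| := by ring
    _ ≤ (b - x) * (M * (x - a)) + (x - a) * (M * (b - x)) := by
      gcongr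
      exacts [sub_nonneg.2 hx.2, sub_nonneg.2 hx.1]
    _ = 2 * M * edgeWeight a b x := by unfold edgeWeight; ring

theorem sq_mul_abs_le (hφ : IsClamped a b φ) {M : ℝ}
    (hM : ∀ x ∈ Icc a b, |deriv (deriv φ) x| ≤ M) {x : ℝ} (hx : x ∈ Icc a b) :
    (b - a) ^ 2 * |φ x| ≤ 4 * M * edgeWeight a b x ^ 2 := by
  have hsub {e : ℝ} (he : e ∈ Icc a b) : ∀ y ∈ uIcc e x, |deriv (deriv φ) y| ≤ M :=
    fun y hy => hM y (ordConnected_Icc.uIcc_subset he hx hy)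
  have hdiff : Differentiable ℝ φ := hφ.contDiff.differentiable (by simp)
  have hdiff' : Differentiable ℝ (deriv φ) := hφ.contDiff_deriv.differentiable (by simp)
  have hab : a ≤ b := hx.1.trans hx.2
  have ha := abs_le_mul_sq_of_abs_deriv_deriv_le hdiff hdiff' hφ.apply_left hφ.deriv_left
    (hsub (left_mem_Icc.2 hab))
  have hb := abs_le_mul_sq_of_abs_deriv_deriv_le hdiff hdiff' hφ.apply_right hφ.deriv_right
    (hsub (right_mem_Icc.2 hab))
  rw [sq_abs] at ha hb
  calc (b - a) ^ 2 * |φ x|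
      ≤ 2 * ((b - x) ^ 2 * |φ x| + (x - a) ^ 2 * |φ x|) := by
        nlinarith [mul_nonneg (sq_nonneg (b - x - (x - a))) (abs_nonneg (φ x))]
    _ ≤ 2 * ((b - x) ^ 2 * (M * (x - a) ^ 2) + (x - a) ^ 2 * (M * (x - b) ^ 2)) := by gcongr
    _ = 4 * M * edgeWeight a b x ^ 2 := by unfold edgeWeight; ring

/-- The derivatives of the cutoff are of order `w⁻¹` and `w⁻²` in the edge weight `w`, uniformly in
`N`; this is compensated by `φ'` and `φ` vanishing like `w` and `w²`. -/
protected theorem exists_abs_deriv_deriv_edgeCutoff_mul_le (hφ : IsClamped a b φ) (hab : a < b) :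
    ∃ C, ∀ N, ∀ x ∈ Icc a b, |deriv (deriv fun x => edgeCutoff a b N x * φ x) x| ≤ C := by
  obtain ⟨M, hM⟩ := hφ.exists_abs_deriv_deriv_le
  obtain ⟨C₁, hC₁⟩ := exists_abs_deriv_edgeCutoff_mul_le a b
  obtain ⟨C₂, hC₂⟩ := exists_abs_deriv_deriv_edgeCutoff_mul_le a b
  refine ⟨C₂ * (4 * M / (b - a) ^ 2) + 2 * (C₁ * (2 * M / (b - a))) + 1 * M, fun N x hx => ?_⟩
  have hw := edgeWeight_nonneg hx
  have hba : 0 < b - a := sub_pos.2 hab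
  have hM0 : 0 ≤ M := (abs_nonneg _).trans (hM x hx)
  have h0 : |φ x| ≤ edgeWeight a b x ^ 2 * (4 * M / (b - a) ^ 2) := by
    rw [← mul_div_assoc, le_div_iff₀ (by positivity)]
    linarith [hφ.sq_mul_abs_le hM hx]
  have h1 : |deriv φ x| ≤ edgeWeight a b x * (2 * M / (b - a)) := by
    rw [← mul_div_assoc, le_div_iff₀ hba]
    linarith [hφ.mul_abs_deriv_le hM hx]
  have hχ₁ := hC₁ N x hx
  have hχ₂ := hC₂ N x hx
  rw [abs_mul, abs_of_nonneg hw] at hχ₁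
  rw [abs_mul, abs_of_nonneg (pow_nonneg hw 2)] at hχ₂
  rw [deriv_deriv_mul ((contDiff_edgeCutoff a b N).of_le (WithTop.coe_le_coe.2 le_top))
    (hφ.contDiff.of_le (WithTop.coe_le_coe.2 le_top))]
  refine (abs_add_three _ _ _).trans (add_le_add_three ?_ ?_ ?_)
  · rw [abs_mul]
    refine (mul_le_mul_of_nonneg_left h0 (abs_nonneg _)).trans ?_
    rw [← mul_assoc]
    exact mul_le_mul_of_nonneg_right hχ₂ (by positivity)
  · rw [abs_mul, abs_two, abs_mul]
    refine mul_le_mul_of_nonneg_left ((mul_le_mul_of_nonneg_left h1 (abs_nonneg _)).trans ?_)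
      zero_le_two
    rw [← mul_assoc]
    exact mul_le_mul_of_nonneg_right hχ₁ (by positivity)
  · rw [abs_mul]
    exact mul_le_mul (abs_edgeCutoff_le_one a b N x) (hM x hx) (abs_nonneg _) zero_le_one

theorem isTestFunction_edgeCutoff_mul (hφ : IsClamped a b φ) (hab : a ≤ b) (n : ℕ) :
    IsTestFunction (Ioo a b) fun x => edgeCutoff a b n x * φ x := by
  have htsupport := (tsupport_mul_subset_left (f := edgeCutoff a b n) (g := φ)).trans
    (tsupport_edgeCutoff_subset hab n.cast_nonneg)
  exact ⟨(contDiff_edgeCutoff a b n).mul hφ.contDiff,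
    isCompact_Icc.of_isClosed_subset (isClosed_tsupport _) (htsupport.trans Ioo_subset_Icc_self),
    htsupport⟩

theorem mul_integral_sq_le_integral_deriv_deriv_sq (hφ : IsClamped a b φ) (hab : a < b) {c : ℝ}
    (hc : c ∈ lowerBounds (beamQuotients (Ioo a b))) :
    c * ∫ x in a..b, φ x ^ 2 ≤ ∫ x in a..b, deriv (deriv φ) x ^ 2 := by
  have htest := hφ.isTestFunction_edgeCutoff_mul hab.le
  have heq (x : ℝ) (hx : x ∈ Ioo a b) :
      ∀ᶠ n : ℕ in atTop, (fun y => edgeCutoff a b n y * φ y) =ᶠ[𝓝 x] φ := by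
    filter_upwards [eventually_edgeCutoff_eventuallyEq_one hx] with n hn
    filter_upwards [hn] with y hy
    rw [hy, one_mul]
  obtain ⟨C₀, hC₀⟩ := isCompact_Icc.exists_bound_of_continuousOn hφ.contDiff.continuous.continuousOn
  obtain ⟨C₂, hC₂⟩ := hφ.exists_abs_deriv_deriv_edgeCutoff_mul_le hab
  have hsq := tendsto_integral_sq_of_eventually_eq hab.le htest
    (fun n x hx => (abs_mul _ _).trans_le (mul_le_mul (abs_edgeCutoff_le_one a b n x)
      (hC₀ x hx) (abs_nonneg _) zero_le_one))
    (fun x hx => (heq x hx).mono fun n hn => hn.eq_of_nhds)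
  have hsq'' := tendsto_integral_sq_of_eventually_eq hab.le (fun n => (htest n).deriv.deriv)
    (fun n => hC₂ n) (fun x hx => (heq x hx).mono fun n hn => hn.deriv.deriv_eq)
  exact le_of_tendsto_of_tendsto' (hsq.const_mul c) hsq'' fun n =>
    mem_lowerBounds_beamQuotients.1 hc _ (htest n)

end IsClamped

end Clamped

section ClampedMode

theorem IsClamped.integral_deriv_deriv_sq {a b : ℝ} {φ : ℝ → ℝ} (hφ : IsClamped a b φ) :
    ∫ x in a..b, deriv (deriv φ) x ^ 2 =
      ∫ x in a..b, deriv (deriv (deriv (deriv φ))) x * φ x := by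
  have h₁ := hφ.contDiff_deriv
  have h₂ := (contDiff_infty_iff_deriv.1 h₁).2
  have h₃ := (contDiff_infty_iff_deriv.1 h₂).2
  have h₄ := (contDiff_infty_iff_deriv.1 h₃).2
  have hasDeriv {g : ℝ → ℝ} (hg : ContDiff ℝ (⊤ : ℕ∞) g) :
      ∀ x ∈ uIcc a b, HasDerivAt g (deriv g x) x :=
    fun x _ => (hg.differentiable (by simp) x).hasDerivAt
  have hparts := intervalIntegral.integral_mul_deriv_eq_deriv_mul (hasDeriv h₂) (hasDeriv h₁)
    (h₃.continuous.intervalIntegrable a b) (h₂.continuous.intervalIntegrable a b)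
  have hparts' := intervalIntegral.integral_mul_deriv_eq_deriv_mul (hasDeriv h₃)
    (hasDeriv hφ.contDiff) (h₄.continuous.intervalIntegrable a b)
    (h₁.continuous.intervalIntegrable a b)
  rw [hφ.deriv_left, hφ.deriv_right] at hparts
  rw [hφ.apply_left, hφ.apply_right] at hparts'
  simp_rw [pow_two]
  linarith

theorem IsClamped.le_of_mem_lowerBounds_beamQuotients {a b κ c : ℝ} {φ : ℝ → ℝ}
    (hφ : IsClamped a b φ) (hab : a < b) (heig : ∀ x, deriv (deriv (deriv (deriv φ))) x = κ * φ x)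
    (hne : deriv (deriv φ) a ≠ 0) (hc : c ∈ lowerBounds (beamQuotients (Ioo a b))) : c ≤ κ := by
  have henergy : ∫ x in a..b, deriv (deriv φ) x ^ 2 = κ * ∫ x in a..b, φ x ^ 2 := by
    rw [hφ.integral_deriv_deriv_sq, ← intervalIntegral.integral_const_mul]
    congr with x
    rw [heig]
    ring
  have hcont : Continuous (deriv (deriv φ)) := hφ.contDiff_deriv.continuous_deriv (by simp)
  have hpos : 0 < ∫ x in a..b, deriv (deriv φ) x ^ 2 :=
    intervalIntegral.integral_pos hab (hcont.pow 2).continuousOn (fun x _ => sq_nonneg _)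
      ⟨a, left_mem_Icc.2 hab.le, by positivity⟩
  have hnonneg : 0 ≤ ∫ x in a..b, φ x ^ 2 :=
    intervalIntegral.integral_nonneg hab.le fun x _ => sq_nonneg _
  have hle := hφ.mul_integral_sq_le_integral_deriv_deriv_sq hab hc
  rw [henergy] at hle hpos
  exact le_of_mul_le_mul_right hle (hnonneg.lt_of_ne' (right_ne_zero_of_mul hpos.ne'))

/-- The general solution of the beam equation `y'''' = k⁴ y`. -/
def beamSolution (k p q r s x : ℝ) : ℝ :=
  p * cosh (k * x) + q * sinh (k * x) + r * cos (k * x) + s * sin (k * x)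

theorem contDiff_beamSolution (k p q r s : ℝ) :
    ContDiff ℝ (⊤ : ℕ∞) (beamSolution k p q r s) := by
  unfold beamSolution
  fun_prop

theorem deriv_beamSolution (k p q r s : ℝ) :
    deriv (beamSolution k p q r s) = beamSolution k (k * q) (k * p) (k * s) (-(k * r)) := by
  ext x
  have hlin : HasDerivAt (fun x => k * x) k x := by
    simpa using (hasDerivAt_id x).const_mul k
  have hsum : HasDerivAt (beamSolution k p q r s) _ x :=
    (((hlin.cosh.const_mul p).fun_add (hlin.sinh.const_mul q)).fun_add
      (hlin.cos.const_mul r)).fun_add (hlin.sin.const_mul s)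
  rw [hsum.deriv, beamSolution]
  ring

theorem deriv_deriv_deriv_deriv_beamSolution (k p q r s x : ℝ) :
    deriv (deriv (deriv (deriv (beamSolution k p q r s)))) x =
      k ^ 4 * beamSolution k p q r s x := by
  simp only [deriv_beamSolution, beamSolution]
  ring

/-- The solution of `y'''' = k⁴ y` vanishing with its first derivative at `0` and vanishing at `L`,
normalized without division. -/
def clampedMode (k L : ℝ) : ℝ → ℝ :=
  beamSolution k (sinh (k * L) - sin (k * L)) (cos (k * L) - cosh (k * L))
    (sin (k * L) - sinh (k * L)) (cosh (k * L) - cos (k * L))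

theorem isClamped_clampedMode {k L : ℝ} (hkL : cos (k * L) * cosh (k * L) = 1) :
    IsClamped 0 L (clampedMode k L) where
  contDiff := contDiff_beamSolution _ _ _ _ _
  apply_left := by simp [clampedMode, beamSolution]
  apply_right := by
    simp only [clampedMode, beamSolution]
    ring
  deriv_left := by
    simp only [clampedMode, deriv_beamSolution, beamSolution, mul_zero, cosh_zero, sinh_zero,
      cos_zero, sin_zero]
    ring
  deriv_right := by
    simp only [clampedMode, deriv_beamSolution, beamSolution]
    linear_combination 2 * k * hkL - k * cosh_sq (k * L) - k * sin_sq_add_cos_sq (k * L)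

theorem deriv_deriv_clampedMode_zero_pos {k L : ℝ} (hk : 0 < k) (hL : 0 < L) :
    0 < deriv (deriv (clampedMode k L)) 0 := by
  have hkL : 0 < k * L := mul_pos hk hL
  have hgap : sin (k * L) < sinh (k * L) := (sin_lt hkL).trans (self_lt_sinh_iff.2 hkL)
  have heq : deriv (deriv (clampedMode k L)) 0 = 2 * k ^ 2 * (sinh (k * L) - sin (k * L)) := by
    simp only [clampedMode, deriv_beamSolution, beamSolution, mul_zero, cosh_zero, sinh_zero,
      cos_zero, sin_zero]
    ring
  rw [heq]
  have := sub_pos.2 hgap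
  positivity

theorem isGLB_beamQuotients_Ioo {k L : ℝ} (hk : 0 < k) (hL : 0 < L)
    (hkL : cos (k * L) * cosh (k * L) = 1) (hne : ∀ x ∈ Ioo 0 L, cos (k * x) * cosh (k * x) ≠ 1) :
    IsGLB (beamQuotients (Ioo 0 L)) (k ^ 4) :=
  ⟨mem_lowerBounds_beamQuotients.2 fun _ hf => hf.pow_four_mul_integral_sq_le hne,
    fun _ hc => (isClamped_clampedMode hkL).le_of_mem_lowerBounds_beamQuotients hL
      (deriv_deriv_deriv_deriv_beamSolution _ _ _ _ _)
      (deriv_deriv_clampedMode_zero_pos hk hL).ne' hc⟩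

theorem isGLB_beamQuotients_of_isLeast {ω L : ℝ}
    (hω : IsLeast {x : ℝ | 0 < x ∧ cos x * cosh x = 1} ω) (hL : 0 < L) :
    IsGLB (beamQuotients (Ioo 0 L)) ((ω / L) ^ 4) := by
  have hk : 0 < ω / L := div_pos hω.1.1 hL
  refine isGLB_beamQuotients_Ioo hk hL ?_ fun x hx hroot => ?_
  · rw [div_mul_cancel₀ _ hL.ne']
    exact hω.1.2
  · have hlt : ω / L * x < ω / L * L := mul_lt_mul_of_pos_left hx.2 hk
    rw [div_mul_cancel₀ _ hL.ne'] at hlt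
    exact (hω.2 ⟨mul_pos hk hx.1, hroot⟩).not_gt hlt

end ClampedMode

section Plate

variable {u : ℝ × ℝ → ℝ} {Ω : Set (ℝ × ℝ)}

theorem pd_one_zero_apply {p : ℝ × ℝ} (hu : DifferentiableAt ℝ u p) :
    pd (1, 0) u p = deriv (fun x => u (x, p.2)) p.1 :=
  (hu.hasFDerivAt.comp_hasDerivAt p.1
    ((hasDerivAt_id p.1).prodMk (hasDerivAt_const p.1 p.2))).deriv.symm

theorem pd_zero_one_apply {p : ℝ × ℝ} (hu : DifferentiableAt ℝ u p) :
    pd (0, 1) u p = deriv (fun y => u (p.1, y)) p.2 :=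
  (hu.hasFDerivAt.comp_hasDerivAt p.2
    ((hasDerivAt_const p.2 p.1).prodMk (hasDerivAt_id p.2))).deriv.symm

theorem pd_zero (v : ℝ × ℝ) : pd v 0 = 0 := by
  ext p
  simp [pd]

theorem differentiable_pd (hu : ContDiff ℝ 2 u) (v : ℝ × ℝ) : Differentiable ℝ (pd v u) :=
  ((hu.fderiv_right (m := 1) (by norm_num)).clm_apply contDiff_const).differentiable one_ne_zero

theorem uxx_apply (hu : ContDiff ℝ 2 u) (p : ℝ × ℝ) :
    uxx u p = deriv (deriv fun x => u (x, p.2)) p.1 := by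
  rw [uxx, pd_one_zero_apply (differentiable_pd hu _ p)]
  congr with x
  exact pd_one_zero_apply (hu.differentiable two_ne_zero _)

theorem uyy_apply (hu : ContDiff ℝ 2 u) (p : ℝ × ℝ) :
    uyy u p = deriv (deriv fun y => u (p.1, y)) p.2 := by
  rw [uyy, pd_zero_one_apply (differentiable_pd hu _ p)]
  congr with y
  exact pd_zero_one_apply (hu.differentiable two_ne_zero _)

namespace Adm

theorem contDiff_two (hu : Adm Ω u) : ContDiff ℝ 2 u :=
  hu.1.of_le (WithTop.coe_le_coe.2 le_top)

protected theorem pd (hu : Adm Ω u) (v : ℝ × ℝ) : Adm Ω (pd v u) :=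
  ⟨(hu.1.fderiv_right (by simp)).clm_apply contDiff_const, hu.2.1.fderiv_apply ℝ v,
    (tsupport_fderiv_apply_subset ℝ v).trans hu.2.2⟩

protected theorem uxx (hu : Adm Ω u) : Adm Ω (uxx u) :=
  (hu.pd _).pd _

protected theorem uyy (hu : Adm Ω u) : Adm Ω (uyy u) :=
  (hu.pd _).pd _

theorem integrable_sq (hu : Adm Ω u) : Integrable fun p => u p ^ 2 :=
  integrable_sq_of_hasCompactSupport hu.1.continuous hu.2.1

theorem integral_sq_pos (hu : Adm Ω u) (h0 : u ≠ 0) : 0 < ∫ p, u p ^ 2 :=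
  integral_sq_pos_of_hasCompactSupport hu.1.continuous hu.2.1 h0

theorem isTestFunction_comp (hu : Adm Ω u) {γ : ℝ → ℝ × ℝ} (hγ : ContDiff ℝ (⊤ : ℕ∞) γ)
    (hγ' : IsClosedEmbedding γ) {I : Set ℝ} (hI : γ ⁻¹' Ω ⊆ I) :
    IsTestFunction I fun t => u (γ t) where
  contDiff := hu.1.comp hγ
  hasCompactSupport := hu.2.1.comp_isClosedEmbedding hγ'
  tsupport_subset := (tsupport_comp_subset_preimage u hγ.continuous).trans
    ((preimage_mono hu.2.2).trans hI)

variable {I J : Set ℝ}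

theorem isTestFunction_horizontal (hu : Adm (I ×ˢ J) u) (y : ℝ) :
    IsTestFunction I fun x => u (x, y) :=
  hu.isTestFunction_comp (contDiff_id.prodMk contDiff_const)
    (Function.LeftInverse.isClosedEmbedding (f := Prod.fst) (fun _ => rfl) continuous_fst
      (by fun_prop)) fun _ hx => hx.1

theorem isTestFunction_vertical (hu : Adm (I ×ˢ J) u) (x : ℝ) :
    IsTestFunction J fun y => u (x, y) :=
  hu.isTestFunction_comp (contDiff_const.prodMk contDiff_id)
    (Function.LeftInverse.isClosedEmbedding (f := Prod.snd) (fun _ => rfl) continuous_snd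
      (by fun_prop)) fun _ hy => hy.2

theorem mul_integral_sq_le_integral_uxx_sq (hu : Adm (I ×ˢ J) u) {κ : ℝ}
    (hκ : κ ∈ lowerBounds (beamQuotients I)) : κ * ∫ p, u p ^ 2 ≤ ∫ p, uxx u p ^ 2 := by
  have hint := hu.integrable_sq
  have hint' := hu.uxx.integrable_sq
  rw [Measure.volume_eq_prod] at hint hint' ⊢
  rw [integral_prod_symm _ hint, integral_prod_symm _ hint', ← integral_const_mul]
  refine integral_mono (hint.integral_prod_right.const_mul κ) hint'.integral_prod_right fun y => ?_
  simp only [uxx_apply hu.contDiff_two]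
  exact mem_lowerBounds_beamQuotients.1 hκ _ (hu.isTestFunction_horizontal y)

theorem mul_integral_sq_le_integral_uyy_sq (hu : Adm (I ×ˢ J) u) {κ : ℝ}
    (hκ : κ ∈ lowerBounds (beamQuotients J)) : κ * ∫ p, u p ^ 2 ≤ ∫ p, uyy u p ^ 2 := by
  have hint := hu.integrable_sq
  have hint' := hu.uyy.integrable_sq
  rw [Measure.volume_eq_prod] at hint hint' ⊢
  rw [integral_prod _ hint, integral_prod _ hint', ← integral_const_mul]
  refine integral_mono (hint.integral_prod_left.const_mul κ) hint'.integral_prod_left fun x => ?_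
  simp only [uyy_apply hu.contDiff_two]
  exact mem_lowerBounds_beamQuotients.1 hκ _ (hu.isTestFunction_vertical x)

end Adm

theorem mem_lowerBounds_plateQuotients {c : ℝ} :
    c ∈ lowerBounds (plateQuotients Ω) ↔
      ∀ u, Adm Ω u → c * ∫ p, u p ^ 2 ≤ ∫ p, (uxx u p ^ 2 + uyy u p ^ 2) :=
  mem_lowerBounds_rayleighQuotients (fun _ hu => hu.integral_sq_pos)
    (by simp [uxx, uyy, pd_zero]) (by simp)

variable {I J : Set ℝ} {f g : ℝ → ℝ}

theorem uxx_prod_mul (hf : ContDiff ℝ 2 f) (hg : ContDiff ℝ 2 g) (p : ℝ × ℝ) :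
    uxx (fun p => f p.1 * g p.2) p = deriv (deriv f) p.1 * g p.2 := by
  rw [uxx_apply (by fun_prop)]
  simp

theorem uyy_prod_mul (hf : ContDiff ℝ 2 f) (hg : ContDiff ℝ 2 g) (p : ℝ × ℝ) :
    uyy (fun p => f p.1 * g p.2) p = f p.1 * deriv (deriv g) p.2 := by
  rw [uyy_apply (by fun_prop)]
  simp

theorem adm_prod_mul (hf : IsTestFunction I f) (hg : IsTestFunction J g) :
    Adm (I ×ˢ J) fun p => f p.1 * g p.2 := by
  have htsupport : tsupport (fun p : ℝ × ℝ => f p.1 * g p.2) ⊆ tsupport f ×ˢ tsupport g :=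
    closure_minimal (fun p hp => ⟨subset_tsupport f (left_ne_zero_of_mul hp),
      subset_tsupport g (right_ne_zero_of_mul hp)⟩)
      ((isClosed_tsupport f).prod (isClosed_tsupport g))
  exact ⟨(hf.contDiff.comp contDiff_fst).mul (hg.contDiff.comp contDiff_snd),
    (hf.hasCompactSupport.prod hg.hasCompactSupport).of_isClosed_subset (isClosed_tsupport _)
      htsupport,
    htsupport.trans (prod_mono hf.tsupport_subset hg.tsupport_subset)⟩

theorem integral_prod_mul_sq (f g : ℝ → ℝ) :
    ∫ p : ℝ × ℝ, (f p.1 * g p.2) ^ 2 = (∫ x, f x ^ 2) * ∫ y, g y ^ 2 := by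
  simp_rw [mul_pow, Measure.volume_eq_prod]
  exact integral_prod_mul (fun x => f x ^ 2) fun y => g y ^ 2

theorem integral_uxx_sq_add_uyy_sq_prod_mul (hf : IsTestFunction I f) (hg : IsTestFunction J g) :
    ∫ p, (uxx (fun p => f p.1 * g p.2) p ^ 2 + uyy (fun p => f p.1 * g p.2) p ^ 2) =
      (∫ x, deriv (deriv f) x ^ 2) * (∫ y, g y ^ 2) +
        (∫ x, f x ^ 2) * ∫ y, deriv (deriv g) y ^ 2 := by
  have hu := adm_prod_mul hf hg
  rw [integral_add hu.uxx.integrable_sq hu.uyy.integrable_sq]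
  simp_rw [uxx_prod_mul hf.contDiff_two hg.contDiff_two,
    uyy_prod_mul hf.contDiff_two hg.contDiff_two, integral_prod_mul_sq]

open scoped Pointwise in
theorem beamQuotients_add_subset_plateQuotients (I J : Set ℝ) :
    beamQuotients I + beamQuotients J ⊆ plateQuotients (I ×ˢ J) := by
  rintro _ ⟨_, ⟨f, hf, hf0, rfl⟩, _, ⟨g, hg, hg0, rfl⟩, rfl⟩
  have hfpos := hf.integral_sq_pos hf0
  have hgpos := hg.integral_sq_pos hg0
  refine ⟨fun p => f p.1 * g p.2, adm_prod_mul hf hg, ?_, ?_⟩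
  · obtain ⟨x, hx⟩ := Function.ne_iff.1 hf0
    obtain ⟨y, hy⟩ := Function.ne_iff.1 hg0
    exact fun h => mul_ne_zero hx hy (congr_fun h (x, y))
  · beta_reduce
    rw [integral_uxx_sq_add_uyy_sq_prod_mul hf hg, integral_prod_mul_sq]
    field_simp

theorem isGLB_plateQuotients_prod {κ ν : ℝ} (hI : IsGLB (beamQuotients I) κ)
    (hJ : IsGLB (beamQuotients J) ν) : IsGLB (plateQuotients (I ×ˢ J)) (κ + ν) := by
  refine ⟨mem_lowerBounds_plateQuotients.2 fun u hu => ?_, fun c hc =>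
    (hI.add hJ).2 fun μ hμ => hc (beamQuotients_add_subset_plateQuotients I J hμ)⟩
  rw [integral_add hu.uxx.integrable_sq hu.uyy.integrable_sq, add_mul]
  exact add_le_add (hu.mul_integral_sq_le_integral_uxx_sq hI.1)
    (hu.mul_integral_sq_le_integral_uyy_sq hJ.1)

end Plate

theorem anisotropic_operator_first_eigenvalue_general
    (ω : ℝ) (hω : IsLeast {x : ℝ | 0 < x ∧ Real.cos x * Real.cosh x = 1} ω)
    (L M : ℝ) (hL : 0 < L) (hM : 0 < M) :
    (∀ u : ℝ × ℝ → ℝ, Adm (Ioo 0 L ×ˢ Ioo 0 M) u →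
      (∫ p, ((uxx u p) ^ 2 + (uyy u p) ^ 2)) ≥
        ((ω / L) ^ 4 + (ω / M) ^ 4) * ∫ p, (u p) ^ 2) ∧
    sInf { μ | ∃ u : ℝ × ℝ → ℝ, Adm (Ioo 0 L ×ˢ Ioo 0 M) u ∧ u ≠ 0 ∧
        μ = (∫ p, ((uxx u p) ^ 2 + (uyy u p) ^ 2)) / (∫ p, (u p) ^ 2) } =
      (ω / L) ^ 4 + (ω / M) ^ 4 := by
  have hglb := isGLB_plateQuotients_prod (isGLB_beamQuotients_of_isLeast hω hL)
    (isGLB_beamQuotients_of_isLeast hω hM)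
  exact ⟨mem_lowerBounds_plateQuotients.1 hglb.1, hglb.csInf_eq hglb.nonempty⟩

/-- For the strongly elliptic operator `∂⁴/∂x⁴ + ∂⁴/∂y⁴` on `R_a` with
clamped boundary conditions: the lower bound
`∫ (u_xx)² + (u_yy)² ≥ ω₁⁴(a⁴ + a⁻⁴) ∫ u²` holds for all admissible `u`,
i.e. its first eigenvalue equals `ω₁⁴(a⁴ + a⁻⁴)`. -/
theorem anisotropic_operator_first_eigenvalue
    (ω : ℝ) (hω : IsLeast {x : ℝ | 0 < x ∧ Real.cos x * Real.cosh x = 1} ω)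
    (a : ℝ) (ha : 1 ≤ a) :
    (∀ u : ℝ × ℝ → ℝ, Adm (Rect a) u →
      (∫ p, ((uxx u p) ^ 2 + (uyy u p) ^ 2)) ≥
        ω ^ 4 * (a ^ 4 + a ^ (-4 : ℤ)) * ∫ p, (u p) ^ 2) ∧
    sInf { μ | ∃ u : ℝ × ℝ → ℝ, Adm (Rect a) u ∧ u ≠ 0 ∧
        μ = (∫ p, ((uxx u p) ^ 2 + (uyy u p) ^ 2)) / (∫ p, (u p) ^ 2) } =
      ω ^ 4 * (a ^ 4 + a ^ (-4 : ℤ)) := by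
  have ha0 : 0 < a := one_pos.trans_le ha
  have heq : ω ^ 4 * (a ^ 4 + a ^ (-4 : ℤ)) = (ω / a) ^ 4 + (ω / (1 / a)) ^ 4 := by
    rw [zpow_neg]
    norm_cast
    field_simp
    ring
  rw [heq]
  exact anisotropic_operator_first_eigenvalue_general ω hω a (1 / a) ha0 (one_div_pos.2 ha0)
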